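/- Fix b ∈ ℝ^d. For all 0 ≤ s < t < T and all x, y ∈ ℝ^d one has p_{s,t}(x,y) · p_{t,T}(y,b) / p_{s,T}(x,b) = (2π)^{−d/2} (det Σ(s,t))^{−1/2} exp( −(1/2) ⟨ Σ(s,t)⁻¹ (y − n_{x,b}(s,t)), y − n_{x,b}(s,t) ⟩ ); that is, as a function of y the left-hand side is the Gaussian density with mean vector n_{x,b}(s,t) and covariance matrix Σ(s,t). -/

import Mathlib

/-!
Writing `A = κ(s,t)`, `B = κ(t,T)`, `C = κ(s,T)`, `G = E(T,t)`, the cocycle property of `E` and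
additivity of the integral give `C = G A Gᵀ + B`, `m_x(s,T) = G m_x(s,t) + ρ` and
`m_y(t,T) = G y + ρ` with `ρ = ∫_t^T E(T,u) r(u) du` (`kappa_split`, `mean_split`). The rest is
Gaussian conditioning, i.e. linear algebra. In these terms `Σ(s,t) = G⁻¹ B C⁻¹ G A`, so that
`Σ(s,t)⁻¹ = A⁻¹ + Gᵀ B⁻¹ G` (`bridge_cov_inv`) and `det Σ(s,t) = det A det B / det C`. With the
gain `K = A Gᵀ C⁻¹`, the bridge mean is `n = μ + K (b - ρ - G μ)`, where `μ = m_x(s,t)`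
(`bridge_mean`), and completing the square in `z = y - μ`, `w = b - ρ - G μ` identifies the
exponents (`complete_square`).
-/

open MeasureTheory Matrix Topology Filter

attribute [local instance] Matrix.normedAddCommGroup Matrix.normedSpace

section BridgeHelpers

/-- Completing the square: with `P = A⁻¹ + Gᵀ B⁻¹ G` and `K = A Gᵀ C⁻¹`, where
`C = G A Gᵀ + B`, one has `P K = Gᵀ B⁻¹` and `G K = 1 - B C⁻¹`. -/
lemma complete_square {d : ℕ} (A B C G : Matrix (Fin d) (Fin d) ℝ)
    (hA : IsUnit A.det) (hB : IsUnit B.det) (hC : IsUnit C.det)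
    (sA : Aᵀ = A) (sB : Bᵀ = B)
    (h : C = G * A * Gᵀ + B) (z w : Fin d → ℝ) :
    (A⁻¹ *ᵥ z) ⬝ᵥ z + (B⁻¹ *ᵥ (w - G *ᵥ z)) ⬝ᵥ (w - G *ᵥ z) - (C⁻¹ *ᵥ w) ⬝ᵥ w
      = ((A⁻¹ + Gᵀ * B⁻¹ * G) *ᵥ (z - (A * Gᵀ * C⁻¹) *ᵥ w)) ⬝ᵥ (z - (A * Gᵀ * C⁻¹) *ᵥ w) := by
  have adj : ∀ (M : Matrix (Fin d) (Fin d) ℝ) (u v : Fin d → ℝ),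
      (M *ᵥ u) ⬝ᵥ v = u ⬝ᵥ (Mᵀ *ᵥ v) := fun M u v => by
    rw [dotProduct_mulVec, vecMul_transpose]
  have sAi : (A⁻¹)ᵀ = A⁻¹ := by rw [transpose_nonsing_inv, sA]
  have sBi : (B⁻¹)ᵀ = B⁻¹ := by rw [transpose_nonsing_inv, sB]
  have hPK : (A⁻¹ + Gᵀ * B⁻¹ * G) * (A * Gᵀ * C⁻¹) = Gᵀ * B⁻¹ := by
    calc (A⁻¹ + Gᵀ * B⁻¹ * G) * (A * Gᵀ * C⁻¹)
        = (A⁻¹ * A) * Gᵀ * C⁻¹ + Gᵀ * B⁻¹ * (G * A * Gᵀ) * C⁻¹ := by noncomm_ring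
      _ = Gᵀ * (B⁻¹ * B) * C⁻¹ + Gᵀ * B⁻¹ * (G * A * Gᵀ) * C⁻¹ := by
          rw [nonsing_inv_mul _ hA, nonsing_inv_mul _ hB]; simp
      _ = Gᵀ * B⁻¹ * ((G * A * Gᵀ + B) * C⁻¹) := by noncomm_ring
      _ = Gᵀ * B⁻¹ := by rw [← h, mul_nonsing_inv _ hC, mul_one]
  have hGK : G * (A * Gᵀ * C⁻¹) = 1 - B * C⁻¹ := by
    rw [eq_sub_iff_add_eq, ← mul_nonsing_inv _ hC]
    nth_rw 3 [h]
    noncomm_ring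
  have sP : (A⁻¹ + Gᵀ * B⁻¹ * G)ᵀ = A⁻¹ + Gᵀ * B⁻¹ * G := by
    simp only [transpose_add, transpose_mul, transpose_transpose, sAi, sBi, Matrix.mul_assoc]
  set K := A * Gᵀ * C⁻¹ with hK
  set P := A⁻¹ + Gᵀ * B⁻¹ * G with hP
  have e1 : P *ᵥ (K *ᵥ w) = Gᵀ *ᵥ (B⁻¹ *ᵥ w) := by rw [mulVec_mulVec, hPK, mulVec_mulVec]
  have e2 : (P *ᵥ z) ⬝ᵥ (K *ᵥ w) = (B⁻¹ *ᵥ w) ⬝ᵥ (G *ᵥ z) := by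
    rw [adj, sP, e1, dotProduct_comm, adj, transpose_transpose]
  have e3 : (Gᵀ *ᵥ (B⁻¹ *ᵥ w)) ⬝ᵥ z = (B⁻¹ *ᵥ w) ⬝ᵥ (G *ᵥ z) := by
    rw [adj, transpose_transpose]
  have e4 : (Gᵀ *ᵥ (B⁻¹ *ᵥ w)) ⬝ᵥ (K *ᵥ w) = (B⁻¹ *ᵥ w) ⬝ᵥ w - (C⁻¹ *ᵥ w) ⬝ᵥ w := by
    rw [adj, transpose_transpose, mulVec_mulVec, hGK, sub_mulVec, one_mulVec, dotProduct_sub,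
      adj B⁻¹ w ((B * C⁻¹) *ᵥ w), sBi, mulVec_mulVec, ← Matrix.mul_assoc, nonsing_inv_mul _ hB,
      Matrix.one_mul, dotProduct_comm w]
  have e5 : (P *ᵥ z) ⬝ᵥ z = (A⁻¹ *ᵥ z) ⬝ᵥ z + (B⁻¹ *ᵥ (G *ᵥ z)) ⬝ᵥ (G *ᵥ z) := by
    rw [hP, add_mulVec, add_dotProduct, ← mulVec_mulVec, ← mulVec_mulVec, adj Gᵀ,
      transpose_transpose]
  have e6 : (B⁻¹ *ᵥ (G *ᵥ z)) ⬝ᵥ w = (B⁻¹ *ᵥ w) ⬝ᵥ (G *ᵥ z) := by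
    rw [adj, sBi, dotProduct_comm]
  simp only [mulVec_sub, sub_dotProduct, dotProduct_sub, e1, e2, e3, e4, e5, e6]
  ring

/-- The bridge covariance, inverted: `G'` is the inverse of `G` (namely `E(t,T)`), and the product
`G' B C⁻¹ G A` is `Γ(t,T) Γ(s,T)⁻¹ Γ(s,t)`. -/
lemma bridge_cov_inv {d : ℕ} (A B C G G' : Matrix (Fin d) (Fin d) ℝ)
    (hA : IsUnit A.det) (hB : IsUnit B.det) (hC : IsUnit C.det)
    (hG : G * G' = 1) (h : C = G * A * Gᵀ + B) :
    (G' * B * C⁻¹ * G * A)⁻¹ = A⁻¹ + Gᵀ * B⁻¹ * G := by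
  have hG' : G' * G = 1 := mul_eq_one_comm.mp hG
  apply inv_eq_left_inv
  have h1 : (A⁻¹ + Gᵀ * B⁻¹ * G) * G' * B = A⁻¹ * G' * C := by
    calc (A⁻¹ + Gᵀ * B⁻¹ * G) * G' * B
        = A⁻¹ * G' * B + Gᵀ * B⁻¹ * (G * G') * B := by noncomm_ring
      _ = A⁻¹ * G' * B + 1 * Gᵀ := by
          rw [hG, mul_one, nonsing_inv_mul_cancel_right _ _ hB, one_mul]
      _ = A⁻¹ * G' * B + (A⁻¹ * (G' * G) * A) * Gᵀ := by
          rw [hG', mul_one, nonsing_inv_mul _ hA]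
      _ = A⁻¹ * G' * C := by rw [h]; noncomm_ring
  calc (A⁻¹ + Gᵀ * B⁻¹ * G) * (G' * B * C⁻¹ * G * A)
      = ((A⁻¹ + Gᵀ * B⁻¹ * G) * G' * B) * C⁻¹ * G * A := by noncomm_ring
    _ = A⁻¹ * (G' * (C * C⁻¹) * G) * A := by rw [h1]; noncomm_ring
    _ = 1 := by rw [mul_nonsing_inv _ hC, mul_one, hG', mul_one, nonsing_inv_mul _ hA]

/-- The bridge mean as a correction of the unconditional mean `μ` with gain `A Gᵀ C⁻¹`; the two
coefficients satisfy `G⁻¹ B C⁻¹ G + A Gᵀ C⁻¹ G = 1`. -/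
lemma bridge_mean {d : ℕ} (A B C G G' : Matrix (Fin d) (Fin d) ℝ)
    (hC : IsUnit C.det) (hG : G * G' = 1) (h : C = G * A * Gᵀ + B) (μ c : Fin d → ℝ) :
    (G' * B * C⁻¹ * G) *ᵥ μ + (A * Gᵀ * C⁻¹) *ᵥ c
      = μ + (A * Gᵀ * C⁻¹) *ᵥ (c - G *ᵥ μ) := by
  have hG' : G' * G = 1 := mul_eq_one_comm.mp hG
  have h1 : G' * B * C⁻¹ * G + A * Gᵀ * C⁻¹ * G = 1 := by
    calc G' * B * C⁻¹ * G + A * Gᵀ * C⁻¹ * G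
        = G' * B * C⁻¹ * G + (G' * G) * A * Gᵀ * C⁻¹ * G := by rw [hG', one_mul]
      _ = G' * ((G * A * Gᵀ + B) * C⁻¹) * G := by noncomm_ring
      _ = 1 := by rw [← h, mul_nonsing_inv _ hC, mul_one, hG']
  have h2 : (G' * B * C⁻¹ * G) *ᵥ μ = μ - (A * Gᵀ * C⁻¹ * G) *ᵥ μ := by
    rw [eq_sub_of_add_eq h1, sub_mulVec, one_mulVec]
  rw [h2, mulVec_sub, mulVec_mulVec]
  abel

/-- The normalising constants, applied with `c = (2π)^d`, `a`, `b`, `e` the determinants of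
`A`, `B`, `C`, and `s = det Σ`. -/
lemma sqrt_const (c a b e s : ℝ) (hc : 0 < c) (ha : 0 < a) (hb : 0 < b) (he : 0 < e)
    (hs : s = a * b / e) :
    (√(c * a))⁻¹ * (√(c * b))⁻¹ / (√(c * e))⁻¹ = (√(c * s))⁻¹ := by
  rw [← Real.sqrt_inv, ← Real.sqrt_inv, ← Real.sqrt_inv, ← Real.sqrt_inv,
    ← Real.sqrt_mul (by positivity), ← Real.sqrt_div (by positivity)]
  congr 1
  subst hs
  field_simp

section Integrals

variable {d q : ℕ} {S : ℝ → Matrix (Fin d) (Fin q) ℝ} {r : ℝ → Fin d → ℝ}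
  {E : ℝ → ℝ → Matrix (Fin d) (Fin d) ℝ}

lemma evol_continuousOn
    (hEcont : ContinuousOn (fun x : ℝ × ℝ => E x.1 x.2) (Set.Ici 0 ×ˢ Set.Ici 0))
    {t : ℝ} (ht : 0 ≤ t) : ContinuousOn (fun u => E t u) (Set.Ici 0) :=
  hEcont.comp (f := fun u : ℝ => (t, u)) (by fun_prop) fun _ hu => ⟨ht, hu⟩

lemma uIcc_subset_Ici {a c : ℝ} (ha : 0 ≤ a) (hc : 0 ≤ c) : Set.uIcc a c ⊆ Set.Ici 0 :=
  fun _ hu => le_trans (le_inf ha hc) hu.1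

lemma cov_continuousOn (hS : ContinuousOn S (Set.Ici 0))
    (hEcont : ContinuousOn (fun x : ℝ × ℝ => E x.1 x.2) (Set.Ici 0 ×ˢ Set.Ici 0))
    {t a c : ℝ} (ht : 0 ≤ t) (ha : 0 ≤ a) (hc : 0 ≤ c) :
    ContinuousOn (fun u => E t u * S u * (S u)ᵀ * (E t u)ᵀ) (Set.uIcc a c) := by
  have hE := (evol_continuousOn hEcont ht).mono (uIcc_subset_Ici ha hc)
  have hS' := hS.mono (uIcc_subset_Ici ha hc)
  rw [continuousOn_iff_continuous_domRestrict] at *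
  exact ((hE.matrix_mul hS').matrix_mul hS'.matrix_transpose).matrix_mul hE.matrix_transpose

lemma drift_integrable (hr : ContinuousOn r (Set.Ici 0))
    (hEcont : ContinuousOn (fun x : ℝ × ℝ => E x.1 x.2) (Set.Ici 0 ×ˢ Set.Ici 0))
    {t a c : ℝ} (ht : 0 ≤ t) (ha : 0 ≤ a) (hc : 0 ≤ c) :
    IntervalIntegrable (fun u => E t u *ᵥ r u) volume a c := by
  apply ContinuousOn.intervalIntegrable
  have hE := (evol_continuousOn hEcont ht).mono (uIcc_subset_Ici ha hc)
  have hr' := hr.mono (uIcc_subset_Ici ha hc)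
  rw [continuousOn_iff_continuous_domRestrict] at *
  exact hE.matrix_mulVec hr'

/-- `κ(s,T) = E(T,t) κ(s,t) E(T,t)ᵀ + κ(t,T)`. -/
lemma kappa_split (hS : ContinuousOn S (Set.Ici 0))
    (hEcont : ContinuousOn (fun x : ℝ × ℝ => E x.1 x.2) (Set.Ici 0 ×ˢ Set.Ici 0))
    (hEmul : ∀ u s t : ℝ, 0 ≤ u → 0 ≤ s → 0 ≤ t → E t s * E s u = E t u)
    {s t T : ℝ} (hs : 0 ≤ s) (ht : 0 ≤ t) (hT : 0 ≤ T) :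
    (∫ u in s..T, E T u * S u * (S u)ᵀ * (E T u)ᵀ)
      = E T t * (∫ u in s..t, E t u * S u * (S u)ᵀ * (E t u)ᵀ) * (E T t)ᵀ
        + ∫ u in t..T, E T u * S u * (S u)ᵀ * (E T u)ᵀ := by
  -- `E` is given explicitly because unification must identify the topology of the local norm on
  -- matrices with the product topology.
  have int : ∀ {τ a c : ℝ}, 0 ≤ τ → 0 ≤ a → 0 ≤ c → _ := fun {τ a c} hτ ha hc =>
    ContinuousOn.intervalIntegrable (E := Matrix (Fin d) (Fin d) ℝ) (μ := volume)
      (cov_continuousOn (t := τ) (a := a) (c := c) hS hEcont hτ ha hc)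
  rw [← intervalIntegral.integral_add_adjacent_intervals (E := Matrix (Fin d) (Fin d) ℝ)
    (int hT hs ht) (int hT ht hT)]
  congr 1
  let L : Matrix (Fin d) (Fin d) ℝ →L[ℝ] Matrix (Fin d) (Fin d) ℝ :=
    LinearMap.toContinuousLinearMap
      (LinearMap.mulRight ℝ (E T t)ᵀ ∘ₗ LinearMap.mulLeft ℝ (E T t))
  have hL : ∀ M, L M = E T t * M * (E T t)ᵀ := fun M => rfl
  have hcomm := ContinuousLinearMap.intervalIntegral_comp_comm (𝕜 := ℝ)
    (E := Matrix (Fin d) (Fin d) ℝ) (F := Matrix (Fin d) (Fin d) ℝ) L (int ht hs ht)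
  rw [← hL]
  refine Eq.trans (intervalIntegral.integral_congr fun u hu => ?_) hcomm
  have hu0 : 0 ≤ u := uIcc_subset_Ici hs ht hu
  refine Eq.trans ?_ (hL _).symm
  simp only [← hEmul u t T hu0 ht hT, transpose_mul, Matrix.mul_assoc]

/-- `m_x(s,T) = E(T,t) m_x(s,t) + ρ` with `ρ = ∫_t^T E(T,u) r(u) du`. -/
lemma mean_split (hr : ContinuousOn r (Set.Ici 0))
    (hEcont : ContinuousOn (fun x : ℝ × ℝ => E x.1 x.2) (Set.Ici 0 ×ˢ Set.Ici 0))
    (hEmul : ∀ u s t : ℝ, 0 ≤ u → 0 ≤ s → 0 ≤ t → E t s * E s u = E t u)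
    {s t T : ℝ} (hs : 0 ≤ s) (ht : 0 ≤ t) (hT : 0 ≤ T) (x : Fin d → ℝ) :
    E T s *ᵥ (x + ∫ u in s..T, E s u *ᵥ r u)
      = E T t *ᵥ (E t s *ᵥ (x + ∫ u in s..t, E s u *ᵥ r u)) + ∫ u in t..T, E T u *ᵥ r u := by
  have h1 : E T s *ᵥ (∫ u in t..T, E s u *ᵥ r u) = ∫ u in t..T, E T u *ᵥ r u := by
    let L : (Fin d → ℝ) →L[ℝ] (Fin d → ℝ) := LinearMap.toContinuousLinearMap (mulVecLin (E T s))
    have hL : ∀ v, L v = E T s *ᵥ v := fun v => rfl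
    rw [← hL, ← L.intervalIntegral_comp_comm (drift_integrable hr hEcont hs ht hT)]
    refine intervalIntegral.integral_congr fun u hu => ?_
    simp only [hL, mulVec_mulVec, hEmul u s T (uIcc_subset_Ici ht hT hu) hs hT]
  rw [← intervalIntegral.integral_add_adjacent_intervals
    (drift_integrable hr hEcont hs hs ht) (drift_integrable hr hEcont hs ht hT),
    ← add_assoc, mulVec_add, h1, mulVec_mulVec, hEmul s t T hs ht hT]

end Integrals

end BridgeHelpers

/-- Lemma 1 (gen_multivariate_bridge): for fixed `b ∈ ℝ^d`, `0 ≤ s < t < T` and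
`x, y ∈ ℝ^d`, the ratio `p_{s,t}(x,y) p_{t,T}(y,b) / p_{s,T}(x,b)` equals the Gaussian
density with mean vector `n_{x,b}(s,t)` and covariance matrix `Σ(s,t)`. -/
theorem bridge_transition_density
    {d q : ℕ} (hd : 1 ≤ d)
    (Q : ℝ → Matrix (Fin d) (Fin d) ℝ) (S : ℝ → Matrix (Fin d) (Fin q) ℝ)
    (r : ℝ → Fin d → ℝ)
    (hQ : ContinuousOn Q (Set.Ici 0)) (hS : ContinuousOn S (Set.Ici 0))
    (hr : ContinuousOn r (Set.Ici 0))
    (E : ℝ → ℝ → Matrix (Fin d) (Fin d) ℝ)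
    (hEcont : ContinuousOn (fun x : ℝ × ℝ => E x.1 x.2) (Set.Ici 0 ×ˢ Set.Ici 0))
    (hEid : ∀ t : ℝ, 0 ≤ t → E t t = 1)
    (hEmul : ∀ u s t : ℝ, 0 ≤ u → 0 ≤ s → 0 ≤ t → E t s * E s u = E t u)
    (hEderiv : ∀ s : ℝ, 0 ≤ s → ∀ t : ℝ, 0 ≤ t →
      HasDerivAt (fun τ => E τ s) (Q t * E t s) t)
    (κ Γ : ℝ → ℝ → Matrix (Fin d) (Fin d) ℝ)
    (hκ : ∀ s t : ℝ, 0 ≤ s → s ≤ t →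
      κ s t = ∫ u in s..t, E t u * S u * (S u)ᵀ * (E t u)ᵀ)
    (hΓ : ∀ s t : ℝ, 0 ≤ s → s ≤ t → Γ s t = E s t * κ s t)
    (T : ℝ) (hT : 0 < T)
    (hκpd : ∀ s t : ℝ, 0 ≤ s → s < t → (κ s t).IsSymm ∧ (κ s t).PosDef)
    (Sg : ℝ → ℝ → Matrix (Fin d) (Fin d) ℝ)
    (hSg : ∀ s t : ℝ, 0 ≤ s → s < t → t < T → Sg s t = Γ t T * (Γ s T)⁻¹ * Γ s t)
    -- the mean functions `m_x⁺(s,t)`, `m_x⁻(s,t)` and `m_x(s,t)`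
    (mp mm m : (Fin d → ℝ) → ℝ → ℝ → (Fin d → ℝ))
    (hmp : ∀ (x : Fin d → ℝ) (s t : ℝ), 0 ≤ s → s ≤ t →
      mp x s t = x + ∫ u in s..t, E s u *ᵥ r u)
    (hmm : ∀ (x : Fin d → ℝ) (s t : ℝ), 0 ≤ s → s ≤ t →
      mm x s t = x - ∫ u in s..t, E t u *ᵥ r u)
    (hm : ∀ (x : Fin d → ℝ) (s t : ℝ), 0 ≤ s → s ≤ t → m x s t = E t s *ᵥ mp x s t)
    -- the Gaussian transition densities of the linear process
    (pdens : ℝ → ℝ → (Fin d → ℝ) → (Fin d → ℝ) → ℝ)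
    (hpdens : ∀ (s t : ℝ) (x y : Fin d → ℝ), 0 ≤ s → s < t →
      pdens s t x y = (Real.sqrt ((2 * Real.pi) ^ d * (κ s t).det))⁻¹ *
        Real.exp (-(1 / 2) * ((κ s t)⁻¹ *ᵥ (y - m x s t)) ⬝ᵥ (y - m x s t)))
    -- the mean vector `n_{x,b}(s,t)` of the bridge
    (n : (Fin d → ℝ) → (Fin d → ℝ) → ℝ → ℝ → (Fin d → ℝ))
    (hn : ∀ (x b : Fin d → ℝ) (s t : ℝ), 0 ≤ s → s < t → t < T →
      n x b s t = (Γ t T * (Γ s T)⁻¹) *ᵥ mp x s t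
        + ((Γ s t)ᵀ * ((Γ s T)ᵀ)⁻¹) *ᵥ mm b t T)
    (b : Fin d → ℝ) :
    ∀ (s t : ℝ) (x y : Fin d → ℝ), 0 ≤ s → s < t → t < T →
      pdens s t x y * pdens t T y b / pdens s T x b
        = (Real.sqrt ((2 * Real.pi) ^ d * (Sg s t).det))⁻¹ *
            Real.exp (-(1 / 2) * ((Sg s t)⁻¹ *ᵥ (y - n x b s t)) ⬝ᵥ (y - n x b s t)) := by
  intro s t x y hs hst htT
  have ht : 0 ≤ t := hs.trans hst.le
  have hT0 : 0 ≤ T := hT.le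
  have hsT : s < T := hst.trans htT
  obtain ⟨sA, pA⟩ := hκpd s t hs hst
  obtain ⟨sB, pB⟩ := hκpd t T ht htT
  obtain ⟨sC, pC⟩ := hκpd s T hs hsT
  have hC : κ s T = E T t * κ s t * (E T t)ᵀ + κ t T := by
    rw [hκ s T hs hsT.le, hκ s t hs hst.le, hκ t T ht htT.le]
    exact kappa_split hS hEcont hEmul hs ht hT0
  have hG : E T t * E t T = 1 := by rw [hEmul T t T hT0 ht hT0, hEid T hT0]
  have hF : E t s * E s t = 1 := by rw [hEmul t s t ht hs ht, hEid t ht]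
  have hF' : E s t * E t s = 1 := mul_eq_one_comm.mp hF
  have uA := pA.det_pos.ne'.isUnit
  have uB := pB.det_pos.ne'.isUnit
  have uC := pC.det_pos.ne'.isUnit
  have hΓinv : (Γ s T)⁻¹ = (κ s T)⁻¹ * E T t * E t s := by
    rw [hΓ s T hs hsT.le, Matrix.mul_inv_rev, Matrix.mul_assoc, hEmul s t T hs ht hT0]
    congr 1
    exact inv_eq_left_inv (by rw [hEmul T s T hT0 hs hT0, hEid T hT0])
  have hSg' : Sg s t = E t T * κ t T * (κ s T)⁻¹ * E T t * κ s t := by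
    rw [hSg s t hs hst htT, hΓinv, hΓ t T ht htT.le, hΓ s t hs hst.le]
    calc E t T * κ t T * ((κ s T)⁻¹ * E T t * E t s) * (E s t * κ s t)
        = E t T * κ t T * (κ s T)⁻¹ * E T t * (E t s * E s t) * κ s t := by noncomm_ring
      _ = _ := by rw [hF, mul_one]
  have hdet : (Sg s t).det = (κ s t).det * (κ t T).det / (κ s T).det := by
    have hdG : (E T t).det * (E t T).det = 1 := by rw [← det_mul, hG, det_one]
    have hdC : ((κ s T)⁻¹).det = ((κ s T).det)⁻¹ := by
      rw [det_nonsing_inv, Ring.inverse_eq_inv']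
    rw [hSg']
    simp only [det_mul, hdC]
    linear_combination (κ s t).det * (κ t T).det * ((κ s T).det)⁻¹ * hdG
  set ρ : Fin d → ℝ := ∫ u in t..T, E T u *ᵥ r u with hρ
  -- `ρ` is the drift accumulated over `[t, T]`, transported to time `T`.
  have hmsT : m x s T = E T t *ᵥ m x s t + ρ := by
    rw [hm x s T hs hsT.le, hmp x s T hs hsT.le, hm x s t hs hst.le, hmp x s t hs hst.le]
    exact mean_split hr hEcont hEmul hs ht hT0 x
  have hmtT : m y t T = E T t *ᵥ y + ρ := by
    rw [hm y t T ht htT.le, hmp y t T ht htT.le, mean_split hr hEcont hEmul ht ht hT0 y]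
    simp [hEid t ht, hρ]
  have hnn : n x b s t
      = m x s t + (κ s t * (E T t)ᵀ * (κ s T)⁻¹) *ᵥ (b - ρ - E T t *ᵥ m x s t) := by
    rw [hn x b s t hs hst htT, ← bridge_mean _ _ _ _ _ uC hG hC, hmm b t T ht htT.le]
    congr 1
    · rw [hm x s t hs hst.le, mulVec_mulVec, hΓinv, hΓ t T ht htT.le]
      simp only [Matrix.mul_assoc]
    · congr 1
      rw [← transpose_nonsing_inv, hΓinv, hΓ s t hs hst.le]
      have sCi : ((κ s T)⁻¹)ᵀ = (κ s T)⁻¹ := by rw [transpose_nonsing_inv, sC.eq]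
      simp only [transpose_mul, sA.eq, sCi]
      calc κ s t * (E s t)ᵀ * ((E t s)ᵀ * ((E T t)ᵀ * (κ s T)⁻¹))
          = κ s t * ((E s t)ᵀ * (E t s)ᵀ) * (E T t)ᵀ * (κ s T)⁻¹ := by noncomm_ring
        _ = _ := by rw [← transpose_mul, hF, transpose_one, mul_one]
  have hsq := complete_square _ _ _ _ uA uB uC sA.eq sB.eq hC
    (y - m x s t) (b - ρ - E T t *ᵥ m x s t)
  have v1 : b - m y t T = b - ρ - E T t *ᵥ m x s t - E T t *ᵥ (y - m x s t) := by
    rw [hmtT, mulVec_sub]; abel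
  have v2 : b - m x s T = b - ρ - E T t *ᵥ m x s t := by rw [hmsT]; abel
  have v3 : y - n x b s t
      = y - m x s t - (κ s t * (E T t)ᵀ * (κ s T)⁻¹) *ᵥ (b - ρ - E T t *ᵥ m x s t) := by
    rw [hnn]; abel
  rw [← v1, ← v2] at hsq
  rw [← v2] at v3
  rw [← v3, ← bridge_cov_inv _ _ _ _ _ uA uB uC hG hC, ← hSg'] at hsq
  rw [hpdens s t x y hs hst, hpdens t T y b ht htT, hpdens s T x b hs hsT, ← hsq,
    ← sqrt_const _ _ _ _ _ (by positivity) pA.det_pos pB.det_pos pC.det_pos hdet,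
    mul_sub, mul_add, Real.exp_sub, Real.exp_add]
  ring
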